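/- For any NAT T, the formulas σ(T) and σ*(T) are logically equivalent modulo the auxiliary atoms A*(T): every model of σ(T) can be extended on A*(T) to a model of σ*(T), and the restriction to At of every model of σ*(T) is a model of σ(T). Moreover, if T is a single block B and the renaming in the construction of σ*(T) takes place inside the nesting, then an interpretation M of At is a witness model of B if and only if M = N[At] for some model N of σ*(T). -/

import Mathlib

/-!
STATEMENT 4: the embedding `σ*` of NATs into `L_CIRC`: for any NAT `T`, `σ(T)` and
`σ*(T)` are logically equivalent modulo the auxiliary atoms `A*(T)`, and for a single
block the witness models of `T` are the restrictions of the models of `σ*(T)`.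
-/

namespace NestedCirc

universe u
variable {α : Type u}

/-- Propositional formulas over atoms `α`. -/
inductive PForm (α : Type u) : Type u where
  | tru : PForm α
  | fls : PForm α
  | atom : α → PForm α
  | neg : PForm α → PForm α
  | conj : PForm α → PForm α → PForm α
  | disj : PForm α → PForm α → PForm α

namespace PForm

/-- Satisfaction of a propositional formula in an interpretation (set of true atoms). -/
def sat : PForm α → Set α → Prop
  | tru, _ => True
  | fls, _ => False
  | atom a, M => a ∈ M
  | neg φ, M => ¬ φ.sat M
  | conj φ ψ, M => φ.sat M ∧ ψ.sat M
  | disj φ ψ, M => φ.sat M ∨ ψ.sat M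

/-- Implication `φ → ψ`. -/
def imp (φ ψ : PForm α) : PForm α := disj (neg φ) ψ

/-- Equivalence `φ ↔ ψ`. -/
def iffF (φ ψ : PForm α) : PForm α := conj (imp φ ψ) (imp ψ φ)

/-- The atoms occurring in a formula. -/
def atoms : PForm α → Set α
  | tru => ∅
  | fls => ∅
  | atom a => {a}
  | neg φ => φ.atoms
  | conj φ ψ => φ.atoms ∪ ψ.atoms
  | disj φ ψ => φ.atoms ∪ ψ.atoms

/-- Conjunction of a list of formulas. -/
def conjList (l : List (PForm α)) : PForm α := l.foldr conj tru

end PForm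

/-- `M ≤_{P;Z} M'` : `M` agrees with `M'` on the fixed atoms `(P ∪ Z)ᶜ`
and is smaller or equal on the minimized atoms `P`. -/
def lePZ (P Z M M' : Set α) : Prop :=
  M ∩ P ⊆ M' ∩ P ∧ M ∩ (P ∪ Z)ᶜ = M' ∩ (P ∪ Z)ᶜ

/-- `M <_{P;Z} M'` (strict preference). -/
def ltPZ (P Z M M' : Set α) : Prop := lePZ P Z M M' ∧ ¬ lePZ P Z M' M

/-- A block `{C : B₁,…,Bₘ}` of a nested abnormality theory: the described atoms `C`,
the members that are propositional formulas, and the members that are blocks. -/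
inductive Block (α : Type u) : Type u where
  | mk : Set α → List (PForm α) → List (Block α) → Block α

/-- Satisfaction of a block: `M ⊨ {C : B₁,…,Bₘ}` iff some interpretation `M*` agreeing
with `M` outside `Ab` satisfies every member and is `(Ab;C)`-minimal doing so. -/
def Block.sat (Ab : Set α) : Block α → Set α → Prop
  | .mk C fs bs, M =>
      ∃ Ms : Set α, Ms ∩ Abᶜ = M ∩ Abᶜ ∧
        ((∀ f ∈ fs, f.sat Ms) ∧ ∀ b ∈ bs, Block.sat Ab b Ms) ∧
        ∀ N : Set α, ((∀ f ∈ fs, f.sat N) ∧ ∀ b ∈ bs, Block.sat Ab b N) → ¬ ltPZ Ab C N Ms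

/-- A nested abnormality theory (NAT): a finite collection of blocks. -/
abbrev NAT (α : Type u) := List (Block α)

/-- `M ⊨ T` iff `M` satisfies every block of `T`. -/
def NAT.sat (Ab : Set α) (T : NAT α) (M : Set α) : Prop := ∀ B ∈ T, Block.sat Ab B M

/-- Renaming the atoms of a propositional formula. -/
def PForm.map {β : Type u} (g : α → β) : PForm α → PForm β
  | .tru => .tru
  | .fls => .fls
  | .atom a => .atom (g a)
  | .neg φ => .neg (φ.map g)
  | .conj φ ψ => .conj (φ.map g) (ψ.map g)
  | .disj φ ψ => .disj (φ.map g) (ψ.map g)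

/-- Formulas of `L_CIRC` over atoms `β` (with a constant `tru` for building conjunctions). -/
inductive LCirc (β : Type u) : Type u where
  | tru : LCirc β
  | atom : β → LCirc β
  | conj : LCirc β → LCirc β → LCirc β
  | neg : LCirc β → LCirc β
  | circ : LCirc β → Set β → Set β → LCirc β

/-- Satisfaction for `L_CIRC`: models of `CIRC(φ;P;Z)` are the `(P;Z)`-minimal models of `φ`. -/
def LCirc.sat {β : Type u} : LCirc β → Set β → Prop
  | .tru, _ => True
  | .atom a, M => a ∈ M
  | .conj φ ψ, M => φ.sat M ∧ ψ.sat M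
  | .neg φ, M => ¬ φ.sat M
  | .circ φ P Z, M => φ.sat M ∧ ∀ N : Set β, φ.sat N → ¬ ltPZ P Z N M

def LCirc.conjList {β : Type u} (l : List (LCirc β)) : LCirc β := l.foldr .conj .tru

/-- Embedding propositional formulas into `L_CIRC`. -/
def LCirc.ofP {β : Type u} : PForm β → LCirc β
  | .tru => .tru
  | .fls => .neg .tru
  | .atom a => .atom a
  | .neg φ => .neg (ofP φ)
  | .conj φ ψ => .conj (ofP φ) (ofP ψ)
  | .disj φ ψ => .neg (.conj (.neg (ofP φ)) (.neg (ofP ψ)))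

/-- The extended alphabet for `σ*`: `Sum.inl a` is the original atom `a`, and
`Sum.inr (i, a)` is the `i`-th fresh renamed copy of the abnormality atom `a ∈ Ab`
(one copy per renamed quantifier `∃Ab`). -/
abbrev StarA (α : Type u) := α ⊕ ℕ × α

open Classical in
/-- Renaming of atoms for the `i`-th quantifier `∃Ab`: abnormality atoms are sent to
their `i`-th copy, all other atoms to themselves. -/
noncomputable def rn (Ab : Set α) (i : ℕ) (a : α) : StarA α :=
  if a ∈ Ab then Sum.inr (i, a) else Sum.inl a

mutual
/-- `σ*` on a single block, using copies of `Ab` numbered from `n` onwards.  Returns the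
resulting `L_CIRC` formula, the set of auxiliary atoms introduced (the renamed variables
of the dropped quantifiers), and the next unused copy number.  Following the definition
of `σ*`: all quantifiers `∃Ab` are renamed apart, every circumscriptive subformula
`CIRC(φ;P;Z)` gets the variables quantified inside `φ` added to its floating atoms, and
all quantifiers are dropped. -/
noncomputable def Block.star (Ab : Set α) :
    Block α → ℕ → LCirc (StarA α) × Set (StarA α) × ℕ
  | .mk C fs bs, n =>
      let r := Blocks.star Ab bs (n + 1)
      (LCirc.circ
          (.conj (LCirc.conjList (fs.map fun f => LCirc.ofP (f.map (rn Ab n))))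
                 (LCirc.conjList r.1))
          ((fun a => Sum.inr (n, a)) '' Ab)
          (Sum.inl '' C ∪ r.2.1),
        (fun a => Sum.inr (n, a)) '' Ab ∪ r.2.1,
        r.2.2)

/-- `σ*` on a list of blocks, threading the copy counter. -/
noncomputable def Blocks.star (Ab : Set α) :
    List (Block α) → ℕ → List (LCirc (StarA α)) × Set (StarA α) × ℕ
  | [], n => ([], ∅, n)
  | b :: bs, n =>
      let r1 := Block.star Ab b n
      let r2 := Blocks.star Ab bs r1.2.2
      (r1.1 :: r2.1, r1.2.1 ∪ r2.2.1, r2.2.2)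
end

/-- `σ*(T)` for a NAT `T`: the conjunction of the translations of its blocks, together
with the set `A*(T)` of auxiliary atoms. -/
noncomputable def NAT.star (Ab : Set α) (T : NAT α) : LCirc (StarA α) × Set (StarA α) :=
  (LCirc.conjList (Blocks.star Ab T 0).1, (Blocks.star Ab T 0).2.1)

/-- `σ*` of a single block `B = {C : B₁,…,Bₘ}` where the renaming takes place inside the
nesting: the outermost quantifier `∃Ab` keeps the original abnormality atoms, the inner
quantifiers are renamed to fresh copies. -/
noncomputable def Block.starTop (Ab : Set α) : Block α → LCirc (StarA α)
  | .mk C fs bs =>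
      let r := Blocks.star Ab bs 0
      LCirc.circ
        (.conj (LCirc.conjList (fs.map fun f => LCirc.ofP (f.map Sum.inl)))
               (LCirc.conjList r.1))
        (Sum.inl '' Ab) (Sum.inl '' C ∪ r.2.1)

/-- A witness model of a block `{C : B₁,…,Bₘ}`: an interpretation that is itself an
`(Ab;C)`-minimal model of the members. -/
def Block.witness (Ab : Set α) : Block α → Set α → Prop
  | .mk C fs bs, M =>
      ((∀ f ∈ fs, f.sat M) ∧ ∀ b ∈ bs, Block.sat Ab b M) ∧
      ∀ N : Set α, ((∀ f ∈ fs, f.sat N) ∧ ∀ b ∈ bs, Block.sat Ab b N) → ¬ ltPZ Ab C N M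

/-- Well-formed blocks: the described atoms of every block occurring in it are
atoms not in `Ab`. -/
inductive Block.WF (Ab : Set α) : Block α → Prop where
  | mk {C : Set α} {fs : List (PForm α)} {bs : List (Block α)} :
      C ⊆ Abᶜ → (∀ b ∈ bs, b.WF Ab) → Block.WF Ab (.mk C fs bs)


theorem lePZ_iff' {β : Type u} (P Z M M' : Set β) : lePZ P Z M M' ↔
    (∀ x ∈ P, x ∈ M → x ∈ M') ∧ ∀ x, x ∉ P → x ∉ Z → (x ∈ M ↔ x ∈ M') := by
  unfold lePZ
  simp only [Set.subset_def, Set.ext_iff, Set.mem_inter_iff, Set.mem_compl_iff, Set.mem_union]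
  grind

theorem ltPZ_iff' {β : Type u} (P Z M M' : Set β) : ltPZ P Z M M' ↔
    (∀ x ∈ P, x ∈ M → x ∈ M') ∧ (∀ x, x ∉ P → x ∉ Z → (x ∈ M ↔ x ∈ M')) ∧
      ∃ x ∈ P, x ∈ M' ∧ x ∉ M := by
  unfold ltPZ
  rw [lePZ_iff', lePZ_iff']
  grind

theorem core_sound {β : Type u} (g : α → β) (hg : Function.Injective g) (A : Set β)
    (hA : ∀ a, g a ∉ A) (φ : Set β → Prop) (mem : Set α → Prop) (Ab C : Set α)
    (H1 : ∀ N, φ N → mem (g ⁻¹' N))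
    (H2 : ∀ N0, mem (g ⁻¹' N0) → ∃ N, (∀ x, x ∉ A → (x ∈ N ↔ x ∈ N0)) ∧ φ N)
    (N : Set β) (h : φ N) (hm : ∀ N', φ N' → ¬ ltPZ (g '' Ab) (g '' C ∪ A) N' N) :
    mem (g ⁻¹' N) ∧ ∀ M', mem M' → ¬ ltPZ Ab C M' (g ⁻¹' N) := by
  refine ⟨H1 N h, fun M' hM' hlt => ?_⟩
  rw [ltPZ_iff'] at hlt
  obtain ⟨h1, h2, a, ha, haN, haM⟩ := hlt
  let N0 : Set β := {x | (∃ a, g a = x ∧ a ∈ M') ∨ ((∀ a, g a ≠ x) ∧ x ∈ N)}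
  have hN0 : ∀ a, g a ∈ N0 ↔ a ∈ M' := by
    intro a
    constructor
    · rintro (⟨b, hb, hb'⟩ | ⟨hb, -⟩)
      · rwa [← hg hb]
      · exact absurd rfl (hb a)
    · intro h; exact Or.inl ⟨a, rfl, h⟩
  have hN0' : ∀ x, (∀ a, g a ≠ x) → (x ∈ N0 ↔ x ∈ N) := by
    intro x hx
    constructor
    · rintro (⟨b, hb, hb'⟩ | ⟨hb, h⟩)
      · exact absurd hb (hx b)
      · exact h
    · intro h; exact Or.inr ⟨hx, h⟩
  have e : g ⁻¹' N0 = M' := Set.ext hN0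
  obtain ⟨N', hN', hφ⟩ := H2 N0 (by rw [e]; exact hM')
  refine hm N' hφ ?_
  rw [ltPZ_iff']
  refine ⟨?_, ?_, g a, ⟨a, ha, rfl⟩, haN, ?_⟩
  · rintro _ ⟨b, hb, rfl⟩ hx
    exact h1 b hb ((hN0 b).1 ((hN' _ (hA b)).1 hx))
  · intro x hx1 hx2
    have hxA : x ∉ A := fun h => hx2 (Or.inr h)
    rw [hN' x hxA]
    by_cases hr : ∃ b, g b = x
    · obtain ⟨b, rfl⟩ := hr
      rw [hN0]
      exact h2 b (fun h => hx1 ⟨b, h, rfl⟩) (fun h => hx2 (Or.inl ⟨b, h, rfl⟩))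
    · exact hN0' x (fun b hb => hr ⟨b, hb⟩)
  · rw [hN' _ (hA a), hN0]; exact haM

theorem core_complete {β : Type u} (g : α → β) (hg : Function.Injective g) (A : Set β)
    (hA : ∀ a, g a ∉ A) (φ : Set β → Prop) (mem : Set α → Prop) (Ab C : Set α)
    (H1 : ∀ N, φ N → mem (g ⁻¹' N))
    (H2 : ∀ N0, mem (g ⁻¹' N0) → ∃ N, (∀ x, x ∉ A → (x ∈ N ↔ x ∈ N0)) ∧ φ N)
    (N0 : Set β) (h : mem (g ⁻¹' N0)) (hm : ∀ M', mem M' → ¬ ltPZ Ab C M' (g ⁻¹' N0)) :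
    ∃ N, (∀ x, x ∉ A → (x ∈ N ↔ x ∈ N0)) ∧ φ N ∧
      ∀ N', φ N' → ¬ ltPZ (g '' Ab) (g '' C ∪ A) N' N := by
  obtain ⟨N, hN, hφ⟩ := H2 N0 h
  refine ⟨N, hN, hφ, fun N' hN' hlt => hm _ (H1 N' hN') ?_⟩
  rw [ltPZ_iff'] at hlt ⊢
  obtain ⟨h1, h2, _, ⟨a, ha, rfl⟩, haN, haM⟩ := hlt
  refine ⟨?_, ?_, a, ha, (hN _ (hA a)).1 haN, haM⟩
  · intro b hb hx
    exact (hN _ (hA b)).1 (h1 _ ⟨b, hb, rfl⟩ hx)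
  · intro b hb hc
    have := h2 (g b) (by rintro ⟨c, hc', e⟩; exact hb (hg e ▸ hc'))
      (by
        rintro (⟨c, hc', e⟩ | h)
        · exact hc (hg e ▸ hc')
        · exact hA b h)
    rw [Set.mem_preimage, Set.mem_preimage, this, hN _ (hA b)]

theorem sat_conjList {β : Type u} (l : List (LCirc β)) (N : Set β) :
    (LCirc.conjList l).sat N ↔ ∀ f ∈ l, f.sat N := by
  induction l with
  | nil => simp [LCirc.conjList, LCirc.sat]
  | cons a l ih =>
    have : LCirc.conjList (a :: l) = .conj a (LCirc.conjList l) := rfl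
    rw [this, LCirc.sat, ih]; simp

theorem sat_ofP {β : Type u} (g : α → β) (f : PForm α) (N : Set β) :
    (LCirc.ofP (f.map g)).sat N ↔ f.sat (g ⁻¹' N) := by
  induction f with
  | tru => simp [PForm.map, LCirc.ofP, LCirc.sat, PForm.sat]
  | fls => simp [PForm.map, LCirc.ofP, LCirc.sat, PForm.sat]
  | atom a => simp [PForm.map, LCirc.ofP, LCirc.sat, PForm.sat]
  | neg φ ih => simp [PForm.map, LCirc.ofP, LCirc.sat, PForm.sat, ih]
  | conj φ ψ ih1 ih2 => simp [PForm.map, LCirc.ofP, LCirc.sat, PForm.sat, ih1, ih2]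
  | disj φ ψ ih1 ih2 =>
    simp [PForm.map, LCirc.ofP, LCirc.sat, PForm.sat, ih1, ih2]; tauto

theorem sat_fs {β : Type u} (g : α → β) (fs : List (PForm α)) (N : Set β) :
    (LCirc.conjList (fs.map fun f => LCirc.ofP (f.map g))).sat N ↔
      ∀ f ∈ fs, f.sat (g ⁻¹' N) := by
  rw [sat_conjList]; simp [sat_ofP]

/-- Visible atoms of the translation using copies `n ≤ i < m`. -/
def Vis (n m : ℕ) (x : StarA α) : Prop :=
  match x with
  | .inl _ => True
  | .inr (i, _) => n ≤ i ∧ i < m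

/-- Copies `n ≤ i < m`. -/
def Cp (n m : ℕ) (x : StarA α) : Prop :=
  match x with
  | .inl _ => False
  | .inr (i, _) => n ≤ i ∧ i < m

theorem circ_indep {β : Type u} (φ : LCirc β) (P Z V : Set β) (hP : P ⊆ V) (hZ : Z ⊆ V)
    (h : ∀ N N' : Set β, (∀ x ∈ V, (x ∈ N ↔ x ∈ N')) → φ.sat N → φ.sat N')
    (N N' : Set β) (e : ∀ x ∈ V, (x ∈ N ↔ x ∈ N')) (hN : (LCirc.circ φ P Z).sat N) :
    (LCirc.circ φ P Z).sat N' := by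
  rw [LCirc.sat] at hN ⊢
  refine ⟨h N N' e hN.1, fun K hK hlt => ?_⟩
  let K' : Set β := {x | (x ∈ V ∧ x ∈ K) ∨ (x ∉ V ∧ x ∈ N)}
  have k1 : ∀ x ∈ V, (x ∈ K' ↔ x ∈ K) := by intro x hx; simp [K', hx]
  have k2 : ∀ x, x ∉ V → (x ∈ K' ↔ x ∈ N) := by intro x hx; simp [K', hx]
  refine hN.2 K' (h K K' (fun x hx => (k1 x hx).symm) hK) ?_
  rw [ltPZ_iff'] at hlt ⊢
  obtain ⟨h1, h2, a, ha, haN, haM⟩ := hlt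
  refine ⟨?_, ?_, a, ha, (e a (hP ha)).2 haN, fun h => haM ((k1 a (hP ha)).1 h)⟩
  · intro x hx hk
    exact (e x (hP hx)).2 (h1 x hx ((k1 x (hP hx)).1 hk))
  · intro x hx hz
    by_cases hv : x ∈ V
    · rw [k1 x hv, e x hv]; exact h2 x hx hz
    · exact k2 x hv

theorem block_sat_iff (Ab : Set α) (B : Block α) (M : Set α) :
    B.sat Ab M ↔ ∃ Ms : Set α, Ms ∩ Abᶜ = M ∩ Abᶜ ∧ B.witness Ab Ms := by
  cases B with
  | mk C fs bs => rw [Block.sat]; rfl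

theorem block_sat_congr (Ab : Set α) (B : Block α) (M M' : Set α)
    (h : M ∩ Abᶜ = M' ∩ Abᶜ) (hs : B.sat Ab M) : B.sat Ab M' := by
  rw [block_sat_iff] at hs ⊢
  obtain ⟨Ms, h1, h2⟩ := hs
  exact ⟨Ms, h1.trans h, h2⟩

theorem rn_inj (Ab : Set α) (n : ℕ) : Function.Injective (rn Ab n) := by
  intro a b h
  unfold rn at h
  split_ifs at h <;> simp_all

theorem rn_pos {Ab : Set α} {n : ℕ} {a : α} (h : a ∈ Ab) : rn Ab n a = Sum.inr (n, a) := by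
  simp [rn, h]

theorem rn_neg {Ab : Set α} {n : ℕ} {a : α} (h : a ∉ Ab) : rn Ab n a = Sum.inl a := by
  simp [rn, h]

theorem rn_pre (Ab : Set α) (n : ℕ) (N : Set (StarA α)) :
    (rn Ab n ⁻¹' N) ∩ Abᶜ = (Sum.inl ⁻¹' N) ∩ Abᶜ := by
  ext a
  simp only [Set.mem_inter_iff, Set.mem_preimage, Set.mem_compl_iff]
  constructor
  · rintro ⟨h, h'⟩; rw [rn_neg h'] at h; exact ⟨h, h'⟩
  · rintro ⟨h, h'⟩; rw [rn_neg h']; exact ⟨h, h'⟩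

/-- The invariant of the translation. -/
structure Good (Q : Set α → Prop) (φ : Set (StarA α) → Prop) (A : Set (StarA α))
    (n m : ℕ) : Prop where
  le : n ≤ m
  sub : ∀ x ∈ A, Cp n m x
  indep : ∀ N N' : Set (StarA α), (∀ x, Vis n m x → (x ∈ N ↔ x ∈ N')) → φ N → φ N'
  sound : ∀ N, φ N → Q (Sum.inl ⁻¹' N)
  complete : ∀ N0, Q (Sum.inl ⁻¹' N0) → ∃ N, (∀ x, x ∉ A → (x ∈ N ↔ x ∈ N0)) ∧ φ N

theorem good_nil (Ab : Set α) (n : ℕ) :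
    Good (fun M => ∀ b ∈ ([] : List (Block α)), b.sat Ab M)
      (LCirc.conjList (Blocks.star Ab [] n).1).sat (Blocks.star Ab [] n).2.1 n
      (Blocks.star Ab [] n).2.2 := by
  rw [Blocks.star]
  refine ⟨le_rfl, by simp, ?_, by simp, ?_⟩
  · intros; simp [LCirc.conjList, LCirc.sat]
  · intro N0 _; exact ⟨N0, by simp, by simp [LCirc.conjList, LCirc.sat]⟩

theorem good_cons (Ab : Set α) (b : Block α) (bs : List (Block α)) (n : ℕ)
    (h1 : Good (b.sat Ab) (Block.star Ab b n).1.sat (Block.star Ab b n).2.1 n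
      (Block.star Ab b n).2.2)
    (h2 : ∀ n, Good (fun M => ∀ b ∈ bs, b.sat Ab M)
      (LCirc.conjList (Blocks.star Ab bs n).1).sat (Blocks.star Ab bs n).2.1 n
      (Blocks.star Ab bs n).2.2) :
    Good (fun M => ∀ c ∈ b :: bs, c.sat Ab M)
      (LCirc.conjList (Blocks.star Ab (b :: bs) n).1).sat (Blocks.star Ab (b :: bs) n).2.1 n
      (Blocks.star Ab (b :: bs) n).2.2 := by
  rw [Blocks.star]
  simp only
  specialize h2 (Block.star Ab b n).2.2
  generalize Block.star Ab b n = r1 at *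
  generalize Blocks.star Ab bs r1.2.2 = r2 at *
  have key : ∀ N, (LCirc.conjList (r1.1 :: r2.1)).sat N ↔
      r1.1.sat N ∧ (LCirc.conjList r2.1).sat N := fun N => by
    simp [sat_conjList]
  have l1 := h1.le
  have l2 := h2.le
  refine ⟨l1.trans l2, ?_, ?_, ?_, ?_⟩
  · rintro x (hx | hx)
    · have := h1.sub x hx
      rcases x with x | ⟨i, x⟩ <;> simp only [Cp] at this ⊢
      omega
    · have := h2.sub x hx
      rcases x with x | ⟨i, x⟩ <;> simp only [Cp] at this ⊢
      omega
  · intro N N' e h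
    rw [key] at h ⊢
    refine ⟨h1.indep N N' (fun x hx => e x ?_) h.1, h2.indep N N' (fun x hx => e x ?_) h.2⟩
    · rcases x with x | ⟨i, x⟩ <;> simp only [Vis] at hx ⊢
      omega
    · rcases x with x | ⟨i, x⟩ <;> simp only [Vis] at hx ⊢
      omega
  · intro N h
    rw [key] at h
    intro c hc
    rcases List.mem_cons.1 hc with rfl | hc
    · exact h1.sound N h.1
    · exact h2.sound N h.2 c hc
  · intro N0 h
    obtain ⟨N1, e1, s1⟩ := h1.complete N0 (h b (by simp))
    have e : Sum.inl ⁻¹' N1 = (Sum.inl ⁻¹' N0 : Set α) := by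
      ext a
      exact e1 _ (fun hx => h1.sub _ hx)
    obtain ⟨N2, e2, s2⟩ := h2.complete N1 (by rw [e]; exact fun c hc => h c (by simp [hc]))
    refine ⟨N2, ?_, (key _).2 ⟨h1.indep N1 N2 (fun x hx => (e2 x ?_).symm) s1, s2⟩⟩
    · intro x hx
      rw [e2 x (fun h => hx (Or.inr h)), e1 x (fun h => hx (Or.inl h))]
    · intro hA
      have := h2.sub x hA
      rcases x with x | ⟨i, x⟩ <;> simp only [Vis, Cp] at hx this
      omega

theorem body_H1 {Ab : Set α} {fs : List (PForm α)} {bs : List (Block α)} {n m : ℕ}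
    {ψ : LCirc (StarA α)} {A : Set (StarA α)} (g : α → StarA α)
    (hpre : ∀ N : Set (StarA α), (g ⁻¹' N) ∩ Abᶜ = (Sum.inl ⁻¹' N) ∩ Abᶜ)
    (h : Good (fun M => ∀ b ∈ bs, b.sat Ab M) ψ.sat A n m) (N : Set (StarA α))
    (hN : (LCirc.conj (LCirc.conjList (fs.map fun f => LCirc.ofP (f.map g))) ψ).sat N) :
    (∀ f ∈ fs, f.sat (g ⁻¹' N)) ∧ ∀ b ∈ bs, b.sat Ab (g ⁻¹' N) := by
  rw [LCirc.sat, sat_fs] at hN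
  exact ⟨hN.1, fun b hb => block_sat_congr Ab b _ _ (hpre N).symm (h.sound N hN.2 b hb)⟩

theorem body_H2 {Ab : Set α} {fs : List (PForm α)} {bs : List (Block α)} {n m : ℕ}
    {ψ : LCirc (StarA α)} {A : Set (StarA α)} (g : α → StarA α)
    (hpre : ∀ N : Set (StarA α), (g ⁻¹' N) ∩ Abᶜ = (Sum.inl ⁻¹' N) ∩ Abᶜ)
    (hA : ∀ a, g a ∉ A)
    (h : Good (fun M => ∀ b ∈ bs, b.sat Ab M) ψ.sat A n m) (N0 : Set (StarA α))
    (hN : (∀ f ∈ fs, f.sat (g ⁻¹' N0)) ∧ ∀ b ∈ bs, b.sat Ab (g ⁻¹' N0)) :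
    ∃ N, (∀ x, x ∉ A → (x ∈ N ↔ x ∈ N0)) ∧
    (LCirc.conj (LCirc.conjList (fs.map fun f => LCirc.ofP (f.map g))) ψ).sat N := by
  obtain ⟨N, e, s⟩ := h.complete N0
    (fun b hb => block_sat_congr Ab b _ _ (hpre N0) (hN.2 b hb))
  refine ⟨N, e, ?_⟩
  rw [LCirc.sat, sat_fs]
  have : g ⁻¹' N = g ⁻¹' N0 := by
    ext a; exact e _ (hA a)
  rw [this]
  exact ⟨hN.1, s⟩

theorem good_mk (Ab C : Set α) (hC : C ⊆ Abᶜ) (fs : List (PForm α)) (bs : List (Block α)) (n : ℕ)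
    (h : Good (fun M => ∀ b ∈ bs, b.sat Ab M)
      (LCirc.conjList (Blocks.star Ab bs (n+1)).1).sat (Blocks.star Ab bs (n+1)).2.1 (n+1)
      (Blocks.star Ab bs (n+1)).2.2) :
    Good ((Block.mk C fs bs).sat Ab) (Block.star Ab (.mk C fs bs) n).1.sat
      (Block.star Ab (.mk C fs bs) n).2.1 n (Block.star Ab (.mk C fs bs) n).2.2 := by
  rw [Block.star]
  simp only
  generalize Blocks.star Ab bs (n+1) = r at *
  have l := h.le
  have hA : ∀ a, rn Ab n a ∉ r.2.1 := by
    intro a ha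
    have := h.sub _ ha
    by_cases hb : a ∈ Ab
    · rw [rn_pos hb] at this; simp only [Cp] at this; omega
    · rw [rn_neg hb] at this; exact this
  have eP : (fun a => Sum.inr (n, a) : α → StarA α) '' Ab = rn Ab n '' Ab :=
    Set.image_congr fun a ha => (rn_pos ha).symm
  have eC : (Sum.inl '' C : Set (StarA α)) = rn Ab n '' C :=
    Set.image_congr fun a ha => (rn_neg (hC ha)).symm
  refine ⟨by omega, ?_, ?_, ?_, ?_⟩
  · rintro x (⟨a, ha, rfl⟩ | hx)
    · simp only [Cp]; omega
    · have := h.sub x hx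
      rcases x with x | ⟨i, x⟩ <;> simp only [Cp] at this ⊢
      omega
  · intro N N' e
    refine circ_indep _ _ _ {x | Vis n r.2.2 x} ?_ ?_ ?_ N N' e
    · rintro x ⟨a, ha, rfl⟩
      simp only [Vis, Set.mem_setOf_eq]; omega
    · rintro x (⟨a, ha, rfl⟩ | hx)
      · simp [Vis]
      · have := h.sub x hx
        rcases x with x | ⟨i, x⟩ <;> simp only [Cp, Vis, Set.mem_setOf_eq] at this ⊢
        omega
    · intro K K' ek hK
      rw [LCirc.sat, sat_fs] at hK ⊢
      have : rn Ab n ⁻¹' K = rn Ab n ⁻¹' K' := by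
        ext a
        refine ek _ ?_
        by_cases hb : a ∈ Ab
        · rw [rn_pos hb]; simp only [Vis, Set.mem_setOf_eq]; omega
        · rw [rn_neg hb]; simp [Vis]
      refine ⟨this ▸ hK.1, h.indep K K' (fun x hx => ek x ?_) hK.2⟩
      rcases x with x | ⟨i, x⟩ <;> simp only [Vis, Set.mem_setOf_eq] at hx ⊢
      omega
  · intro N hN
    rw [LCirc.sat, eP, eC] at hN
    rw [block_sat_iff]
    exact ⟨rn Ab n ⁻¹' N, rn_pre Ab n N,
      core_sound (rn Ab n) (rn_inj Ab n) r.2.1 hA _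
        (fun M => (∀ f ∈ fs, f.sat M) ∧ ∀ b ∈ bs, b.sat Ab M) Ab C
        (body_H1 _ (rn_pre Ab n) h) (body_H2 _ (rn_pre Ab n) hA h) N hN.1 hN.2⟩
  · intro N0 hN0
    rw [block_sat_iff] at hN0
    obtain ⟨Ms, e, hw⟩ := hN0
    let N1 : Set (StarA α) := {x | (∃ a ∈ Ab, x = Sum.inr (n, a) ∧ a ∈ Ms) ∨
      ((∀ a ∈ Ab, x ≠ Sum.inr (n, a)) ∧ x ∈ N0)}
    have e1 : rn Ab n ⁻¹' N1 = Ms := by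
      ext a
      have := Set.ext_iff.1 e a
      by_cases hb : a ∈ Ab
      · simp [N1, rn_pos hb, hb]
      · simp [N1, rn_neg hb]
        simp [hb] at this
        exact this.symm
    have hw' : (fun M => ((∀ f ∈ fs, f.sat M) ∧ ∀ b ∈ bs, b.sat Ab M) ∧
      ∀ N : Set α, ((∀ f ∈ fs, f.sat N) ∧ ∀ b ∈ bs, Block.sat Ab b N) → ¬ ltPZ Ab C N M)
        (rn Ab n ⁻¹' N1) := by
      rw [e1]; exact hw
    obtain ⟨N, a1, a2⟩ := core_complete (rn Ab n) (rn_inj Ab n) r.2.1 hA _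
        (fun M => (∀ f ∈ fs, f.sat M) ∧ ∀ b ∈ bs, b.sat Ab M) Ab C
        (body_H1 _ (rn_pre Ab n) h) (body_H2 _ (rn_pre Ab n) hA h) N1 hw'.1 hw'.2
    refine ⟨N, ?_, ?_⟩
    · intro x hx
      rw [a1 x (fun h => hx (Or.inr h))]
      have hx' : ∀ a ∈ Ab, x ≠ Sum.inr (n, a) := fun a ha hh => hx (Or.inl ⟨a, ha, hh.symm⟩)
      constructor
      · rintro (⟨a, ha, hh, -⟩ | ⟨-, hh⟩)
        · exact absurd hh (hx' a ha)
        · exact hh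
      · intro hh; exact Or.inr ⟨hx', hh⟩
    · rw [LCirc.sat, eP, eC]
      exact a2

mutual
theorem good_block (Ab : Set α) : ∀ (B : Block α), B.WF Ab → ∀ n : ℕ,
    Good (B.sat Ab) (Block.star Ab B n).1.sat (Block.star Ab B n).2.1 n
      (Block.star Ab B n).2.2
  | .mk C fs bs, hwf, n =>
    good_mk Ab C (by cases hwf; assumption) fs bs n
      (good_blocks Ab bs (by cases hwf; assumption) (n+1))

theorem good_blocks (Ab : Set α) : ∀ (bs : List (Block α)), (∀ b ∈ bs, b.WF Ab) → ∀ n : ℕ,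
    Good (fun M => ∀ b ∈ bs, b.sat Ab M)
      (LCirc.conjList (Blocks.star Ab bs n).1).sat (Blocks.star Ab bs n).2.1 n
      (Blocks.star Ab bs n).2.2
  | [], _, n => good_nil Ab n
  | b :: bs, hwf, n =>
    good_cons Ab b bs n (good_block Ab b (hwf b (by simp)) n)
      (fun m => good_blocks Ab bs (fun c hc => hwf c (by simp [hc])) m)
end

/-- For any NAT `T`, the formulas `σ(T)` and `σ*(T)` are logically
equivalent modulo the auxiliary atoms `A*(T)`: every model of `σ(T)` can be extended
to a model of `σ*(T)`, and the restriction to the original atoms of every model of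
`σ*(T)` is a model of `σ(T)`.  Moreover, if `T` is a single block `B` and the
renaming in `σ*` takes place inside the nesting, then `M` is a witness model of `B`
iff `M = N[At]` for some model `N` of `σ*(T)`. -/
theorem sigma_star_equivalence (Ab : Set α) :
    (∀ T : NAT α, (∀ B ∈ T, B.WF Ab) →
      (∀ M : Set α, NAT.sat Ab T M →
          ∃ N : Set (StarA α), Sum.inl ⁻¹' N = M ∧ (NAT.star Ab T).1.sat N) ∧
      (∀ N : Set (StarA α), (NAT.star Ab T).1.sat N → NAT.sat Ab T (Sum.inl ⁻¹' N))) ∧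
    (∀ B : Block α, B.WF Ab →
      ∀ M : Set α,
        Block.witness Ab B M ↔
          ∃ N : Set (StarA α), (Block.starTop Ab B).sat N ∧ M = Sum.inl ⁻¹' N) := by
  refine ⟨fun T hT => ⟨fun M hM => ?_, fun N hN => ?_⟩, fun B hB M => ?_⟩
  · have h := good_blocks Ab T hT 0
    have e0 : Sum.inl ⁻¹' (Sum.inl '' M : Set (StarA α)) = M :=
      Set.preimage_image_eq M Sum.inl_injective
    obtain ⟨N, e, s⟩ := h.complete (Sum.inl '' M) (by rw [e0]; exact hM)
    refine ⟨N, ?_, s⟩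
    rw [← e0]
    ext a
    have := e (Sum.inl a) (fun hx => h.sub _ hx)
    rw [e0]
    rw [Set.mem_preimage, this]
    simp
  · exact (good_blocks Ab T hT 0).sound N hN
  · obtain ⟨hC, hbs⟩ := hB
    rename_i C fs bs
    have h := good_blocks Ab bs hbs 0
    rw [Block.starTop]
    generalize Blocks.star Ab bs 0 = r at *
    have hA : ∀ a, Sum.inl a ∉ r.2.1 := fun a ha => h.sub _ ha
    constructor
    · intro hw
      have e0 : Sum.inl ⁻¹' (Sum.inl '' M : Set (StarA α)) = M :=
        Set.preimage_image_eq M Sum.inl_injective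
      have hw' : (fun M => ((∀ f ∈ fs, f.sat M) ∧ ∀ b ∈ bs, b.sat Ab M) ∧
        ∀ N : Set α, ((∀ f ∈ fs, f.sat N) ∧ ∀ b ∈ bs, Block.sat Ab b N) → ¬ ltPZ Ab C N M)
          (Sum.inl ⁻¹' (Sum.inl '' M : Set (StarA α))) := by
        rw [e0]; exact hw
      obtain ⟨N, a1, a2⟩ := core_complete Sum.inl Sum.inl_injective r.2.1 hA _
        (fun M => (∀ f ∈ fs, f.sat M) ∧ ∀ b ∈ bs, b.sat Ab M) Ab C
        (body_H1 _ (fun _ => rfl) h) (body_H2 _ (fun _ => rfl) hA h) _ hw'.1 hw'.2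
      refine ⟨N, ?_, ?_⟩
      · rw [LCirc.sat]; exact a2
      · ext a
        rw [Set.mem_preimage, a1 _ (hA a)]
        simp
    · rintro ⟨N, hN, rfl⟩
      rw [LCirc.sat] at hN
      exact core_sound Sum.inl Sum.inl_injective r.2.1 hA _
        (fun M => (∀ f ∈ fs, f.sat M) ∧ ∀ b ∈ bs, b.sat Ab M) Ab C
        (body_H1 _ (fun _ => rfl) h) (body_H2 _ (fun _ => rfl) hA h) N hN.1 hN.2

end NestedCirc
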